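/- arXiv:2405.11428 — 4 statements merged into one kernel-verified Lean document; each statement's English description precedes it below -/
import Mathlib

section
/- The function t ↦ Σ_{n∈ℤ} t/(1 + t⁴n⁴), defined for t > 0, attains its minimum value at t = √2; that is, for every t > 0, Σ_{n∈ℤ} t/(1 + t⁴n⁴) ≥ Σ_{n∈ℤ} √2/(1 + 4n⁴). -/
open Real in
/-- Chord bound for `sinh`. -/
lemma sinh_le_chord {v p : ℝ} (hv : 0 ≤ v) (hp : 0 < p) (hvp : v ≤ p) :
    sinh v ≤ v / p * sinh p := by
  have hc : ConvexOn ℝ (Set.Ici (0 : ℝ)) sinh := by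
    refine convexOn_of_deriv2_nonneg (convex_Ici 0) continuous_sinh.continuousOn
      differentiable_sinh.differentiableOn ?_ ?_
    · rw [Real.deriv_sinh]; exact differentiable_cosh.differentiableOn
    · intro x hx
      simp only [Function.iterate_succ, Function.iterate_zero, Function.comp, id,
        Real.deriv_sinh, Real.deriv_cosh]
      rw [interior_Ici] at hx
      exact (sinh_pos_iff.2 hx).le
  have h := hc.2 (show (0 : ℝ) ∈ Set.Ici 0 by simp) (show p ∈ Set.Ici 0 by simpa using hp.le)
    (show 0 ≤ 1 - v / p by rw [sub_nonneg, div_le_one hp]; exact hvp)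
    (show 0 ≤ v / p by positivity) (by ring)
  simpa [div_mul_cancel₀ _ hp.ne'] using h

open Real in
lemma hasDeriv_h (C S y : ℝ) : HasDerivAt (fun y => sinh y + C * cos y - S * sin y)
    (cosh y - C * sin y - S * cos y) y := by
  have := ((hasDerivAt_sinh y).add ((hasDerivAt_cos y).const_mul C)).sub
    ((hasDerivAt_sin y).const_mul S)
  exact this.congr_deriv (by ring)

open Real in
lemma hasDeriv_h1 (C S y : ℝ) : HasDerivAt (fun y => cosh y - C * sin y - S * cos y)
    (sinh y - C * cos y + S * sin y) y := by
  have := ((hasDerivAt_cosh y).sub ((hasDerivAt_sin y).const_mul C)).sub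
    ((hasDerivAt_cos y).const_mul S)
  exact this.congr_deriv (by ring)

open Real in
lemma hasDeriv_h2 (C S y : ℝ) : HasDerivAt (fun y => sinh y - C * cos y + S * sin y)
    (cosh y + C * sin y + S * cos y) y := by
  have := ((hasDerivAt_sinh y).sub ((hasDerivAt_cos y).const_mul C)).add
    ((hasDerivAt_sin y).const_mul S)
  exact this.congr_deriv (by ring)

open Real in
lemma key_h (y : ℝ) (hy : -(π / 2) ≤ y) :
    0 ≤ sinh y + cosh (π / 2) * cos y - sinh (π / 2) * sin y := by
  have hpi := pi_gt_three
  have hp : 0 < π / 2 := by linarith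
  have hS1 : π / 2 ≤ sinh (π / 2) := self_le_sinh_iff.2 hp.le
  have hCS : sinh (π / 2) < cosh (π / 2) := sinh_lt_cosh _
  have hsinhpi : sinh π = 2 * sinh (π / 2) * cosh (π / 2) := by
    rw [← sinh_two_mul]; congr 1; ring
  set C := cosh (π / 2) with hC
  set S := sinh (π / 2) with hS
  have hd : deriv (fun y => sinh y + C * cos y - S * sin y)
      = fun y => cosh y - C * sin y - S * cos y := funext fun y => (hasDeriv_h C S y).deriv
  have hd1 : deriv (fun y => cosh y - C * sin y - S * cos y)
      = fun y => sinh y - C * cos y + S * sin y := funext fun y => (hasDeriv_h1 C S y).deriv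
  have hd2 : deriv (fun y => sinh y - C * cos y + S * sin y)
      = fun y => cosh y + C * sin y + S * cos y := funext fun y => (hasDeriv_h2 C S y).deriv
  have df : Differentiable ℝ (fun y => sinh y + C * cos y - S * sin y) :=
    fun y => (hasDeriv_h C S y).differentiableAt
  have df1 : Differentiable ℝ (fun y => cosh y - C * sin y - S * cos y) :=
    fun y => (hasDeriv_h1 C S y).differentiableAt
  have df2 : Differentiable ℝ (fun y => sinh y - C * cos y + S * sin y) :=
    fun y => (hasDeriv_h2 C S y).differentiableAt
  rcases le_total y 0 with h0 | h0
  · have h1 := sinh_le_chord (v := -y) (p := π / 2) (by linarith) hp (by linarith)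
    have h2 := mul_le_sin (x := -y) (by linarith) (by linarith)
    have h3 : 0 ≤ cos y := cos_nonneg_of_neg_pi_div_two_le_of_le hy (by linarith)
    rw [sinh_neg] at h1
    rw [sin_neg] at h2
    have e : -y / (π / 2) = 2 / π * -y := by field_simp
    rw [e] at h1
    have h4 : 2 / π * -y * S ≤ -sin y * S := mul_le_mul_of_nonneg_right h2 (by linarith)
    have h5 : 0 ≤ C * cos y := mul_nonneg (by linarith) h3
    linarith
  rcases le_total y (π / 2) with h1 | h1
  · have hconv : ConvexOn ℝ (Set.Icc 0 (π / 2)) (fun y => cosh y - C * sin y - S * cos y) := by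
      refine convexOn_of_deriv2_nonneg (convex_Icc _ _) df1.continuous.continuousOn
        df1.differentiableOn ?_ ?_
      · rw [hd1]; exact df2.differentiableOn
      · intro x hx
        simp only [Function.iterate_succ, Function.iterate_zero, Function.comp, id, hd1, hd2]
        rw [interior_Icc] at hx
        have a1 := cosh_pos x
        have a2 : 0 ≤ sin x := sin_nonneg_of_nonneg_of_le_pi hx.1.le (by linarith [hx.2])
        have a3 : 0 ≤ cos x := cos_nonneg_of_neg_pi_div_two_le_of_le (by linarith [hx.1]) hx.2.le
        have : 0 < C := by linarith
        have : 0 < S := by linarith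
        positivity
    have hanti : AntitoneOn (fun y => sinh y + C * cos y - S * sin y) (Set.Icc 0 (π / 2)) := by
      refine antitoneOn_of_deriv_nonpos (convex_Icc _ _) df.continuous.continuousOn
        df.differentiableOn ?_
      intro x hx
      rw [hd]
      have hm := hconv.le_max_of_mem_Icc (x := 0) (y := π / 2) (z := x) (by simp [hp.le])
        (by simp [hp.le]) (interior_subset hx)
      refine hm.trans (max_le ?_ ?_)
      · simp; linarith
      · simp [← hC]
    have := hanti ⟨h0, h1⟩ ⟨hp.le, le_rfl⟩ h1
    simpa [← hS] using this
  rcases le_total y π with h2 | h2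
  · have hmono1 : MonotoneOn (fun y => cosh y - C * sin y - S * cos y) (Set.Icc (π / 2) π) := by
      refine monotoneOn_of_deriv_nonneg (convex_Icc _ _) df1.continuous.continuousOn
        df1.differentiableOn ?_
      intro x hx
      rw [interior_Icc] at hx
      rw [hd1]
      have a1 : 0 < sinh x := sinh_pos_iff.2 (by linarith [hx.1])
      have a2 : 0 ≤ S * sin x := mul_nonneg (by linarith)
        (sin_nonneg_of_nonneg_of_le_pi (by linarith [hx.1]) hx.2.le)
      have a3 : 0 ≤ C * -cos x := mul_nonneg (by linarith)
        (neg_nonneg.2 (cos_nonpos_of_pi_div_two_le_of_le hx.1.le (by linarith [hx.2])))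
      simp only
      linarith
    have hmono : MonotoneOn (fun y => sinh y + C * cos y - S * sin y) (Set.Icc (π / 2) π) := by
      refine monotoneOn_of_deriv_nonneg (convex_Icc _ _) df.continuous.continuousOn
        df.differentiableOn ?_
      intro x hx
      rw [hd]
      have hx' := interior_subset hx
      have := hmono1 ⟨le_rfl, by linarith⟩ hx' hx'.1
      simpa [← hC] using this
    have := hmono ⟨le_rfl, by linarith⟩ ⟨h1, h2⟩ h1
    simpa [← hS] using this
  · have a1 : sinh π ≤ sinh y := sinh_le_sinh.2 h2
    have a2 := neg_one_le_cos y
    have a3 := sin_le_one y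
    nlinarith

open Real in
lemma key_u (u : ℝ) (hu : 0 < u) :
    sinh (π / 2) * (sin u ^ 2 + sinh u ^ 2) ≤
      cosh (π / 2) * (sin u * cos u + sinh u * cosh u) := by
  have h := key_h (2 * u - π / 2) (by linarith)
  rw [cos_sub_pi_div_two, sin_sub_pi_div_two, sinh_sub, sin_two_mul, cos_two_mul, sinh_two_mul,
    cosh_two_mul] at h
  have e1 := sin_sq_add_cos_sq u
  have e2 := cosh_sq u
  rw [e2] at h
  linear_combination (1 / 2) * h + sinh (π / 2) * e1

open Complex in
lemma cot_re (u : ℝ) (hu : 0 < u) :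
    ((1 + I) * cot (u * (1 + I))).re =
      (Real.sin u * Real.cos u + Real.sinh u * Real.cosh u) /
        (Real.sin u ^ 2 + Real.sinh u ^ 2) := by
  have e : (u : ℂ) * (1 + I) = u + u * I := by ring
  have hpos : 0 < Real.sin u ^ 2 + Real.sinh u ^ 2 := by
    have := Real.sinh_pos_iff.2 hu
    positivity
  have hs : sin (u + u * I) = ⟨Real.sin u * Real.cosh u, Real.cos u * Real.sinh u⟩ := by
    rw [sin_add_mul_I]
    apply Complex.ext <;> simp [← ofReal_sin, ← ofReal_cos, ← ofReal_sinh, ← ofReal_cosh]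
  have hc : cos (u + u * I) = ⟨Real.cos u * Real.cosh u, -(Real.sin u * Real.sinh u)⟩ := by
    rw [cos_add_mul_I]
    apply Complex.ext <;> simp [← ofReal_sin, ← ofReal_cos, ← ofReal_sinh, ← ofReal_cosh]
  have hn : normSq ⟨Real.sin u * Real.cosh u, Real.cos u * Real.sinh u⟩
      = Real.sin u ^ 2 + Real.sinh u ^ 2 := by
    rw [normSq_mk]
    linear_combination Real.sin u ^ 2 * Real.cosh_sq u
      + Real.sinh u ^ 2 * Real.sin_sq_add_cos_sq u
  rw [e, cot, hs, hc, ← mul_div_assoc, div_re, hn, ← add_div]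
  congr 1
  simp
  linear_combination Real.sin u * Real.cos u * Real.cosh_sq u
      + Real.sinh u * Real.cosh u * Real.sin_sq_add_cos_sq u

open Complex in
lemma hasSum_b (b : ℝ) (hb : 0 < b) :
    HasSum (fun n : ℤ => 4 * b ^ 4 / (4 * b ^ 4 + (n : ℝ) ^ 4))
      (Real.pi * b * ((Real.sin (Real.pi * b) * Real.cos (Real.pi * b)
        + Real.sinh (Real.pi * b) * Real.cosh (Real.pi * b)) /
        (Real.sin (Real.pi * b) ^ 2 + Real.sinh (Real.pi * b) ^ 2))) := by
  set z : ℂ := b * (1 + I) with hz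
  have him : z.im = b := by simp [hz]
  have hzi : z ∈ integerComplement := by
    rintro ⟨n, hn⟩
    have := congrArg Complex.im hn
    rw [him] at this
    simp at this
    linarith
  have hz0 : z ≠ 0 := by
    intro h; rw [h] at him; simp at him; linarith
  have h1 : HasSum (fun n => cotTerm z n) (Real.pi * cot (Real.pi * z) - 1 / z) :=
    (Summable.hasSum_iff_tendsto_nat (summable_cotTerm hzi)).mpr
      (tendsto_logDeriv_euler_cot_sub hzi)
  have h2 := Complex.hasSum_re (h1.mul_left (z / 2))
  have hterm : ∀ n : ℕ, (z / 2 * cotTerm z n).re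
      = 4 * b ^ 4 / (4 * b ^ 4 + ((n : ℝ) + 1) ^ 4) := by
    intro n
    have hD : 0 < 4 * b ^ 4 + ((n : ℝ) + 1) ^ 4 := by positivity
    have hD' : (4 * b ^ 4 + ((n : ℂ) + 1) ^ 4) ≠ 0 := by exact_mod_cast hD.ne'
    have p1 := integerComplement_add_ne_zero hzi (n + 1)
    have p2 := integerComplement_add_ne_zero hzi (-(n + 1))
    push_cast at p1 p2
    have hz2 : z ^ 2 = 2 * b ^ 2 * I := by
      rw [hz]; linear_combination (b : ℂ) ^ 2 * I_sq
    have : z / 2 * cotTerm z n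
        = (((4 * b ^ 4 / (4 * b ^ 4 + ((n : ℝ) + 1) ^ 4) : ℝ) : ℂ)
          + ((-(2 * b ^ 2 * ((n : ℝ) + 1) ^ 2) / (4 * b ^ 4 + ((n : ℝ) + 1) ^ 4) : ℝ) : ℂ) * I) := by
      rw [cotTerm_identity hzi]
      have p3 : (z + (n + 1)) * (z - (n + 1)) ≠ 0 := mul_ne_zero p1 (by simpa [sub_eq_add_neg, add_comm] using p2)
      have : z / 2 * (2 * z * (1 / ((z + (n + 1)) * (z - (n + 1)))))
        = z ^ 2 / ((z + (n + 1)) * (z - (n + 1))) := by ring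
      rw [this, div_eq_iff p3]
      have : (z + (n + 1)) * (z - (n + 1)) = z ^ 2 - (n + 1) ^ 2 := by ring
      rw [this, hz2]
      push_cast
      rw [div_mul_eq_mul_div, ← add_div, div_mul_eq_mul_div, eq_div_iff hD']
      linear_combination (4 * (b : ℂ) ^ 4 * (n + 1) ^ 2) * I_sq
    rw [this, add_re, re_ofReal_mul, ofReal_re, I_re, mul_zero, add_zero]
  simp only [hterm] at h2
  have h3 := HasSum.of_add_one_of_neg_add_one
    (f := fun n : ℤ => 4 * b ^ 4 / (4 * b ^ 4 + (n : ℝ) ^ 4))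
    (by
      refine h2.congr_fun ?_
      intro n
      push_cast
      rfl) (by
      refine h2.congr_fun ?_
      intro n
      push_cast
      rw [Even.neg_pow (by decide)])
  convert h3 using 1
  have e : z / 2 * (Real.pi * cot (Real.pi * z) - 1 / z)
      = ((Real.pi * b / 2 : ℝ) : ℂ) * ((1 + I) * cot (((Real.pi * b : ℝ) : ℂ) * (1 + I)))
        - ((1 / 2 : ℝ) : ℂ) := by
    have e1 : ((Real.pi * b : ℝ) : ℂ) * (1 + I) = Real.pi * z := by
      rw [hz]; push_cast; ring
    have e2 : z / 2 * (1 / z) = 1 / 2 := by field_simp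
    rw [e1, mul_sub, e2]
    generalize cot (Real.pi * z) = w
    rw [hz]; push_cast; ring
  rw [e, sub_re, re_ofReal_mul, ofReal_re, cot_re _ (by positivity)]
  have : 4 * b ^ 4 / (4 * b ^ 4 + ((0 : ℤ) : ℝ) ^ 4) = 1 := by
    have : 4 * b ^ 4 ≠ 0 := by positivity
    simp [this]
  rw [this]
  ring

lemma tsum_t (t : ℝ) (ht : 0 < t) :
    ∑' n : ℤ, t / (1 + t ^ 4 * (n : ℝ) ^ 4) = Real.pi / Real.sqrt 2 *
      ((Real.sin (Real.pi / (Real.sqrt 2 * t)) * Real.cos (Real.pi / (Real.sqrt 2 * t))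
        + Real.sinh (Real.pi / (Real.sqrt 2 * t)) * Real.cosh (Real.pi / (Real.sqrt 2 * t))) /
        (Real.sin (Real.pi / (Real.sqrt 2 * t)) ^ 2
          + Real.sinh (Real.pi / (Real.sqrt 2 * t)) ^ 2)) := by
  have hs : 0 < Real.sqrt 2 := by positivity
  have hs4 : Real.sqrt 2 ^ 4 = 4 := by
    have := Real.sq_sqrt (show (0 : ℝ) ≤ 2 by norm_num)
    rw [show (4 : ℕ) = 2 * 2 from rfl, pow_mul, this]; norm_num
  have h := (hasSum_b (1 / (Real.sqrt 2 * t)) (by positivity)).mul_left t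
  have e : Real.pi * (1 / (Real.sqrt 2 * t)) = Real.pi / (Real.sqrt 2 * t) := by ring
  rw [e, ← mul_assoc] at h
  have e2 : t * (Real.pi / (Real.sqrt 2 * t)) = Real.pi / Real.sqrt 2 := by field_simp
  rw [e2] at h
  rw [← h.tsum_eq]
  refine tsum_congr fun n => ?_
  have e3 : 4 * (1 / (Real.sqrt 2 * t)) ^ 4 = 1 / t ^ 4 := by
    rw [div_pow, mul_pow, hs4]; field_simp
  rw [e3]
  have : 0 < 1 + t ^ 4 * (n : ℝ) ^ 4 := by positivity
  field_simp

/-- The function `t ↦ Σ_{n∈ℤ} t/(1 + t⁴n⁴)` on `t > 0` attains its minimum at `t = √2`. -/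
theorem statement5 (t : ℝ) (ht : 0 < t) :
    (∑' n : ℤ, Real.sqrt 2 / (1 + 4 * (n : ℝ) ^ 4))
      ≤ ∑' n : ℤ, t / (1 + t ^ 4 * (n : ℝ) ^ 4) := by
  have hs : 0 < Real.sqrt 2 := by positivity
  have hs2 : Real.sqrt 2 * Real.sqrt 2 = 2 := Real.mul_self_sqrt (by norm_num)
  have hs4 : Real.sqrt 2 ^ 4 = 4 := by
    rw [show Real.sqrt 2 ^ 4 = (Real.sqrt 2 * Real.sqrt 2) ^ 2 by ring, hs2]; norm_num
  have h0 := tsum_t (Real.sqrt 2) hs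
  rw [hs4, hs2] at h0
  rw [h0, tsum_t t ht]
  refine mul_le_mul_of_nonneg_left ?_ (by positivity)
  have hu : 0 < Real.pi / (Real.sqrt 2 * t) := by positivity
  have hk := key_u _ hu
  set u := Real.pi / (Real.sqrt 2 * t)
  have hp1 : 0 < Real.sin u ^ 2 + Real.sinh u ^ 2 := by
    have := Real.sinh_pos_iff.2 hu
    positivity
  have hC := Real.cosh_sq (Real.pi / 2)
  have hC0 := Real.cosh_pos (Real.pi / 2)
  rw [Real.sin_pi_div_two, Real.cos_pi_div_two, one_pow, add_comm 1, ← hC,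
    div_le_div_iff₀ (by positivity) hp1]
  nlinarith
end

section
/- Let α ≥ 12 be an even integer and let s_α > 0 be a minimizer of t ↦ Σ_{n∈ℤ} t·f_α(t n) over t > 0. Then |s_α^α − (α − 2 + √((α−2)² − 3))| ≤ (2α/0.99²)·(α+1)²/(2^{α−1}(α−1)). -/
/-- The lattice energy `t ↦ Σ_{n∈ℤ} t·f_α(t n)` with `f_α(x) = 1/(1+x^α)`. -/
noncomputable def latticeEnergy (α : ℕ) (t : ℝ) : ℝ :=
  ∑' n : ℤ, t * (1 / (1 + (t * (n : ℝ)) ^ α))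

lemma aux_summable (α : ℕ) (hα : Even α) (hα12 : 12 ≤ α) (c : ℝ) (hc : 0 < c) :
    Summable fun n : ℤ => 1 / (1 + (c * (n : ℝ)) ^ α) := by
  have h := (Real.summable_one_div_int_pow (p := α)).2 (by omega)
  have h2 := h.mul_left ((1 / c) ^ α)
  refine Summable.of_norm_bounded_eventually h2 ?_
  have : ({0} : Set ℤ).Finite := Set.finite_singleton 0
  filter_upwards [this.compl_mem_cofinite] with n hn
  have hn0 : (n : ℝ) ≠ 0 := by
    simpa using hn
  have hp : 0 < (n : ℝ) ^ α := hα.pow_pos hn0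
  have hcp : 0 < c ^ α := pow_pos hc _
  rw [mul_pow, Real.norm_of_nonneg (by positivity), div_pow, one_pow, div_mul_div_comm, one_mul]
  apply one_div_le_one_div_of_le (by positivity)
  linarith

/-- conversion of an even integer sum into a sum over naturals -/
lemma aux_even (f : ℤ → ℝ) (hf : f.Even) (hs : Summable f) :
    ∑' n, f n = f 0 + 2 * ∑' k : ℕ, f ((k : ℤ) + 1) := by
  rw [tsum_int_eq_zero_add_two_mul_tsum_pnat hf hs]
  have := tsum_pnat_eq_tsum_succ (f := fun n : ℕ => f (n : ℤ))
  simp only [Nat.cast_add, Nat.cast_one] at this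
  rw [this]
  simp [two_mul]

lemma aux_summable_nat (f : ℤ → ℝ) (hs : Summable f) (m : ℤ) :
    Summable fun k : ℕ => f ((k : ℤ) + m) := by
  apply hs.comp_injective (i := fun k : ℕ => (k : ℤ) + m)
  intro a b h
  simpa using h

lemma aux_tail_term (α : ℕ) (hα12 : 12 ≤ α) (k : ℕ) :
    1 / ((k : ℝ) + 2) ^ α ≤ 2 / 2 ^ α * (1 / ((k : ℝ) + 1) - 1 / ((k : ℝ) + 2)) := by
  have hk : (0 : ℝ) ≤ k := Nat.cast_nonneg k
  have h1 : ((k : ℝ) + 2) ^ α = 2 ^ α * (1 + (k : ℝ) / 2) ^ α := by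
    rw [← mul_pow]; congr 1; ring
  have h2 : (1 + (k : ℝ) / 2) ^ 4 ≤ (1 + (k : ℝ) / 2) ^ α :=
    pow_le_pow_right₀ (by linarith) (by omega)
  have h3 : ((k : ℝ) + 1) * (k + 2) / 2 ≤ (1 + (k : ℝ) / 2) ^ 4 := by
    have : 0 ≤ (k : ℝ) ^ 2 := by positivity
    have : 0 ≤ (k : ℝ) ^ 3 := by positivity
    have : 0 ≤ (k : ℝ) ^ 4 := by positivity
    nlinarith
  have h4 : 2 / 2 ^ α * (1 / ((k : ℝ) + 1) - 1 / ((k : ℝ) + 2))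
      = 1 / (2 ^ α * (((k : ℝ) + 1) * (k + 2) / 2)) := by
    field_simp
    ring
  rw [h4, h1]
  apply one_div_le_one_div_of_le (by positivity)
  gcongr
  linarith

lemma aux_tail_sum (α : ℕ) (hα12 : 12 ≤ α) (N : ℕ) :
    ∑ k ∈ Finset.range N, 1 / ((k : ℝ) + 2) ^ α ≤ 2 / 2 ^ α := by
  have h : ∑ k ∈ Finset.range N, 1 / ((k : ℝ) + 2) ^ α
      ≤ 2 / 2 ^ α * (1 - 1 / ((N : ℝ) + 1)) := by
    induction N with
    | zero => simp
    | succ n ih =>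
      rw [Finset.sum_range_succ]
      have := aux_tail_term α hα12 n
      push_cast
      have e : (n : ℝ) + 1 + 1 = n + 2 := by ring
      rw [e]
      linarith
  refine h.trans ?_
  have : 0 < 1 / ((N : ℝ) + 1) := by positivity
  have h2 : (0 : ℝ) < 2 / 2 ^ α := by positivity
  nlinarith

lemma aux_tail_summable (α : ℕ) (hα12 : 12 ≤ α) :
    Summable fun k : ℕ => 1 / ((k : ℝ) + 2) ^ α :=
  summable_of_sum_range_le (fun _ => by positivity) (aux_tail_sum α hα12)

lemma aux_tail (α : ℕ) (hα12 : 12 ≤ α) : ∑' k : ℕ, 1 / ((k : ℝ) + 2) ^ α ≤ 2 / 2 ^ α :=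
  Real.tsum_le_of_sum_range_le (fun _ => by positivity) (aux_tail_sum α hα12)

lemma aux_energy (α : ℕ) (hα : Even α) (hα12 : 12 ≤ α) (t : ℝ) (ht : 0 < t) :
    latticeEnergy α t = t + 2 * ∑' k : ℕ, t * (1 / (1 + (t * ((k : ℝ) + 1)) ^ α)) := by
  unfold latticeEnergy
  rw [aux_even _ _ ((aux_summable α hα hα12 t ht).mul_left t)]
  · have : α ≠ 0 := by omega
    simp [this]
  · intro n
    simp [hα.neg_pow]

lemma aux_energy_summable (α : ℕ) (hα : Even α) (hα12 : 12 ≤ α) (t : ℝ) (ht : 0 < t) :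
    Summable fun k : ℕ => t * (1 / (1 + (t * ((k : ℝ) + 1)) ^ α)) := by
  have := aux_summable_nat _ ((aux_summable α hα hα12 t ht).mul_left t) 1
  simpa using this

lemma aux_upper (α : ℕ) (hα : Even α) (hα12 : 12 ≤ α) :
    latticeEnergy α (1.28 : ℝ) ≤ 1.41 := by
  rw [aux_energy α hα hα12 _ (by norm_num),
    (aux_energy_summable α hα hα12 1.28 (by norm_num)).tsum_eq_zero_add]
  have h1 : ∑' k : ℕ, (1.28 : ℝ) * (1 / (1 + (1.28 * (((k + 1 : ℕ) : ℝ) + 1)) ^ α))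
      ≤ ∑' k : ℕ, 1.28 * (1 / ((k : ℝ) + 2) ^ α) := by
    refine Summable.tsum_le_tsum (fun k => ?_) ?_ ((aux_tail_summable α hα12).mul_left _)
    · gcongr
      push_cast
      have : ((k : ℝ) + 2) ^ α ≤ (1.28 * ((k : ℝ) + 1 + 1)) ^ α := by
        have : (0 : ℝ) ≤ k := Nat.cast_nonneg k
        gcongr
        linarith
      linarith
    · exact (summable_nat_add_iff 1).2 (aux_energy_summable α hα hα12 1.28 (by norm_num))
  rw [tsum_mul_left (f := fun k : ℕ => 1 / ((k : ℝ) + 2) ^ α)] at h1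
  have h2 := aux_tail α hα12
  have h3 : (2 : ℝ) / 2 ^ α ≤ 2 / 2 ^ 12 := by
    gcongr
    norm_num
  have h4 : (1.28 : ℝ) * (1 / (1 + (1.28 * (((0 : ℕ) : ℝ) + 1)) ^ α)) ≤ 1.28 * (1 / (1 + 1.28 ^ 12)) := by
    have : (1.28 : ℝ) ^ 12 ≤ 1.28 ^ α := pow_le_pow_right₀ (by norm_num) hα12
    simp only [Nat.cast_zero, zero_add, mul_one]
    gcongr
  have h5 : (1.28 : ℝ) * (1 / (1 + 1.28 ^ 12)) ≤ 0.063 := by norm_num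
  have h6 : (2 : ℝ) / 2 ^ 12 ≤ 0.0005 := by norm_num
  linarith

lemma aux_lower (α : ℕ) (hα : Even α) (hα12 : 12 ≤ α) (s : ℝ) (hs : 0 < s) (N : ℕ)
    (hN : N * s ≤ 1) :
    s + 2 * (N * s) / (1 + (N * s) ^ 12) ≤ latticeEnergy α s := by
  rw [aux_energy α hα hα12 _ hs]
  have h := (aux_energy_summable α hα hα12 s hs).sum_le_tsum (Finset.range N)
    (fun k _ => by positivity)
  have h2 : ∑ k ∈ Finset.range N, s * (1 / (1 + (N * s) ^ 12))
      ≤ ∑ k ∈ Finset.range N, s * (1 / (1 + (s * ((k : ℝ) + 1)) ^ α)) := by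
    apply Finset.sum_le_sum
    intro k hk
    have hk' : (k : ℝ) + 1 ≤ N := by
      exact_mod_cast Finset.mem_range.1 hk
    have h3 : (s * ((k : ℝ) + 1)) ^ α ≤ (N * s) ^ 12 := by
      calc (s * ((k : ℝ) + 1)) ^ α ≤ (N * s) ^ α := by
            rw [mul_comm (N : ℝ) s]
            gcongr
        _ ≤ _ := pow_le_pow_of_le_one (by positivity) hN hα12
    gcongr
  rw [Finset.sum_const, Finset.card_range, nsmul_eq_mul] at h2
  have e : 2 * (N * s) / (1 + (N * s) ^ 12) = 2 * (N * (s * (1 / (1 + (N * s) ^ 12)))) := by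
    ring
  rw [e]
  linarith

lemma aux_convex (K a b w : ℝ) (hK : 0 ≤ K) (ha0 : 0 ≤ a) (ha : a ≤ w) (hb : w ≤ b)
    (h1 : K * (1 + a ^ 12) ≤ 2 * a) (h2 : K * (1 + b ^ 12) ≤ 2 * b) :
    K ≤ 2 * w / (1 + w ^ 12) := by
  have hw : 0 ≤ w := ha0.trans ha
  rw [le_div_iff₀ (by positivity)]
  rcases eq_or_lt_of_le (ha.trans hb) with h | h
  · have : w = a := by linarith
    rw [this]; exact h1
  · have hc := (convexOn_pow (𝕜 := ℝ) 12).2 (Set.mem_Ici.2 ha0) (Set.mem_Ici.2 (hw.trans hb))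
      (div_nonneg (by linarith) (by linarith) : 0 ≤ (b - w) / (b - a))
      (div_nonneg (by linarith) (by linarith) : 0 ≤ (w - a) / (b - a))
      (by rw [← add_div, div_eq_one_iff_eq (by linarith)]; ring)
    have hba : b - a ≠ 0 := by linarith
    have e : (b - w) / (b - a) * a + (w - a) / (b - a) * b = w := by
      field_simp; ring
    simp only [smul_eq_mul, e] at hc
    have l1 : 0 ≤ (b - w) / (b - a) := div_nonneg (by linarith) (by linarith)
    have l2 : 0 ≤ (w - a) / (b - a) := div_nonneg (by linarith) (by linarith)
    have l3 : (b - w) / (b - a) + (w - a) / (b - a) = 1 := by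
      field_simp; ring
    set x := (b - w) / (b - a)
    set y := (w - a) / (b - a)
    have m1 := mul_le_mul_of_nonneg_left h1 l1
    have m2 := mul_le_mul_of_nonneg_left h2 l2
    have m3 := mul_le_mul_of_nonneg_left hc hK
    have hKx : K * (x + y) = K := by rw [l3, mul_one]
    nlinarith

lemma aux_mult (s a b : ℝ) (hs : 0 < s) (hb : 0 ≤ b) (hab : s ≤ b - a) :
    ∃ N : ℕ, a ≤ N * s ∧ N * s ≤ b := by
  refine ⟨⌊b / s⌋₊, ?_, ?_⟩
  · have := Nat.lt_floor_add_one (b / s)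
    rw [div_lt_iff₀ hs] at this
    linarith
  · have := Nat.floor_le (div_nonneg hb hs.le)
    rwa [le_div_iff₀ hs] at this

lemma aux_range (α : ℕ) (hα : Even α) (hα12 : 12 ≤ α) (s s₀ a b K : ℝ) (hs : 0 < s) (N : ℕ)
    (ha : a ≤ N * s) (hb : N * s ≤ b) (hb1 : b ≤ 1) (hs0 : s₀ ≤ s)
    (hK : 0 ≤ K) (ha0 : 0 ≤ a) (hK2 : 1.41 < s₀ + K)
    (h1 : K * (1 + a ^ 12) ≤ 2 * a) (h2 : K * (1 + b ^ 12) ≤ 2 * b) :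
    1.41 < latticeEnergy α s := by
  have := aux_lower α hα hα12 s hs N (hb.trans hb1)
  have := aux_convex K a b (N * s) hK ha0 ha hb h1 h2
  linarith

lemma aux_small (α : ℕ) (hα : Even α) (hα12 : 12 ≤ α) (s : ℝ) (hs : 0 < s) (hs1 : s ≤ 1) :
    1.41 < latticeEnergy α s := by
  by_cases c1 : s ≤ 0.17
  · obtain ⟨N, h1, h2⟩ := aux_mult s 0.72 0.89 hs (by norm_num) (by linarith)
    exact aux_range α hα hα12 s 0 0.72 0.89 1.411 hs N h1 h2 (by norm_num) hs.le
      (by norm_num) (by norm_num) (by norm_num) (by norm_num) (by norm_num)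
  push Not at c1
  by_cases c2 : s ≤ 0.31
  · obtain ⟨N, h1, h2⟩ := aux_mult s 0.63 0.94 hs (by norm_num) (by linarith)
    exact aux_range α hα hα12 s 0.17 0.63 0.94 1.25 hs N h1 h2 (by norm_num) c1.le
      (by norm_num) (by norm_num) (by norm_num) (by norm_num) (by norm_num)
  push Not at c2
  by_cases c3 : s ≤ 0.41
  · obtain ⟨N, h1, h2⟩ := aux_mult s 0.56 0.97 hs (by norm_num) (by linarith)
    exact aux_range α hα hα12 s 0.31 0.56 0.97 1.11 hs N h1 h2 (by norm_num) c2.le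
      (by norm_num) (by norm_num) (by norm_num) (by norm_num) (by norm_num)
  push Not at c3
  by_cases c4 : s ≤ 0.48
  · exact aux_range α hα hα12 s 0.41 0.82 0.96 1.1 hs 2 (by push_cast; linarith)
      (by push_cast; linarith) (by norm_num) c3.le
      (by norm_num) (by norm_num) (by norm_num) (by norm_num) (by norm_num)
  push Not at c4
  by_cases c5 : s ≤ 0.9
  · exact aux_range α hα hα12 s 0.48 0.48 0.9 0.95 hs 1 (by push_cast; linarith)
      (by push_cast; linarith) (by norm_num) c4.le
      (by norm_num) (by norm_num) (by norm_num) (by norm_num) (by norm_num)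
  push Not at c5
  exact aux_range α hα hα12 s 0.9 0.9 1 1 hs 1 (by push_cast; linarith)
      (by push_cast; linarith) (by norm_num) c5.le
      (by norm_num) (by norm_num) (by norm_num) (by norm_num) (by norm_num)

lemma aux_deriv_bound (A v : ℝ) (hA : 2 ≤ A) (hv : 0 ≤ v) :
    |(1 - (A - 1) * v) / (1 + v) ^ 2| ≤ (A - 1) * (1 / (1 + v)) := by
  rw [abs_div, abs_of_pos (by positivity : (0 : ℝ) < (1 + v) ^ 2), div_le_iff₀ (by positivity)]
  have : (A - 1) * (1 / (1 + v)) * (1 + v) ^ 2 = (A - 1) * (1 + v) := by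
    field_simp
  rw [this, abs_le]
  constructor <;> nlinarith [mul_nonneg (by linarith : 0 ≤ A - 1) hv]

lemma aux_hasDeriv (α : ℕ) (hα : Even α) (hα12 : 12 ≤ α) (x y : ℝ) :
    HasDerivAt (fun t : ℝ => t * (1 / (1 + (t * x) ^ α)))
      ((1 - ((α : ℝ) - 1) * (y * x) ^ α) / (1 + (y * x) ^ α) ^ 2) y := by
  have hp : 0 ≤ (y * x) ^ α := hα.pow_nonneg _
  have h1 : HasDerivAt (fun t : ℝ => 1 + (t * x) ^ α) (α * (y * x) ^ (α - 1) * x) y := by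
    have := (((hasDerivAt_id y).mul_const x).pow α).const_add 1
    simpa using this
  have h2 := (hasDerivAt_id y).div h1 (by positivity)
  have e : (fun t : ℝ => t * (1 / (1 + (t * x) ^ α))) = fun t => id t / (1 + (t * x) ^ α) := by
    funext t; simp [div_eq_mul_inv]
  rw [e]
  refine h2.congr_deriv ?_
  congr 1
  have : (y * x) ^ α = (y * x) ^ (α - 1) * (y * x) := by
    rw [← pow_succ]; congr 1; omega
  simp only [id]
  rw [this]; ring

lemma aux_critical (α : ℕ) (hα : Even α) (hα12 : 12 ≤ α) (s : ℝ) (hs : 0 < s)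
    (hmin : ∀ t : ℝ, 0 < t → latticeEnergy α s ≤ latticeEnergy α t) :
    ∃ T : ℝ, 1 + 2 * ((1 - ((α : ℝ) - 1) * s ^ α) / (1 + s ^ α) ^ 2) + 2 * T = 0 ∧
      |T| ≤ ((α : ℝ) - 1) / s ^ α * (2 / 2 ^ α) := by
  have hA : (12 : ℝ) ≤ α := by exact_mod_cast hα12
  set g' : ℤ → ℝ → ℝ := fun n y =>
    (1 - ((α : ℝ) - 1) * (y * n) ^ α) / (1 + (y * n) ^ α) ^ 2 with hg'
  have hsum : Summable fun n : ℤ => ((α : ℝ) - 1) * (1 / (1 + (s / 2 * (n : ℝ)) ^ α)) :=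
    (aux_summable α hα hα12 (s / 2) (by linarith)).mul_left _
  have hb : ∀ (n : ℤ) (y : ℝ), y ∈ Set.Ioi (s / 2) →
      ‖g' n y‖ ≤ ((α : ℝ) - 1) * (1 / (1 + (s / 2 * (n : ℝ)) ^ α)) := by
    intro n y hy
    have hy' : s / 2 < y := hy
    have hn : 0 ≤ (n : ℝ) ^ α := hα.pow_nonneg _
    have h1 := aux_deriv_bound α ((y * n) ^ α) (by linarith) (hα.pow_nonneg _)
    refine h1.trans ?_
    have h0 : 0 ≤ (s / 2 * (n : ℝ)) ^ α := hα.pow_nonneg _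
    have h2 : (s / 2 * (n : ℝ)) ^ α ≤ (y * n) ^ α := by
      rw [mul_pow, mul_pow]
      gcongr
    have h3 : (0 : ℝ) ≤ α - 1 := by linarith
    gcongr
  have hmem : s ∈ Set.Ioi (s / 2) := by simp only [Set.mem_Ioi]; linarith
  have hd : HasDerivAt (fun z => latticeEnergy α z) (∑' n, g' n s) s := by
    unfold latticeEnergy
    exact hasDerivAt_tsum_of_isPreconnected
      (g := fun (n : ℤ) (t : ℝ) => t * (1 / (1 + (t * (n : ℝ)) ^ α))) hsum isOpen_Ioi
      isPreconnected_Ioi (fun n y _ => aux_hasDeriv α hα hα12 n y) hb hmem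
      ((aux_summable α hα hα12 s hs).mul_left s) hmem
  have hloc : IsLocalMin (fun z => latticeEnergy α z) s := by
    filter_upwards [lt_mem_nhds hs] with t ht using hmin t ht
  have hz := hloc.hasDerivAt_eq_zero hd
  have hgs : Summable fun n => g' n s := Summable.of_norm_bounded hsum fun n => hb n s hmem
  rw [aux_even _ (by intro n; simp [hg', hα.neg_pow]) hgs,
    (aux_summable_nat _ hgs 1).tsum_eq_zero_add] at hz
  have hα0 : α ≠ 0 := by omega
  refine ⟨∑' k : ℕ, g' (((k + 1 : ℕ) : ℤ) + 1) s, ?_, ?_⟩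
  · have e0 : g' 0 s = 1 := by simp [hg', hα0]
    have e1 : g' (((0 : ℕ) : ℤ) + 1) s = (1 - ((α : ℝ) - 1) * s ^ α) / (1 + s ^ α) ^ 2 := by
      simp [hg']
    rw [e0, e1] at hz
    linarith
  · have hT := ((aux_tail_summable α hα12).mul_left (((α : ℝ) - 1) / s ^ α)).hasSum
    have := tsum_of_norm_bounded (f := fun k : ℕ => g' (((k + 1 : ℕ) : ℤ) + 1) s) hT (by
      intro k
      have h1 := aux_deriv_bound α ((s * ((k : ℝ) + 2)) ^ α) (by linarith) (hα.pow_nonneg _)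
      have e : g' (((k + 1 : ℕ) : ℤ) + 1) s = (1 - ((α : ℝ) - 1) * (s * ((k : ℝ) + 2)) ^ α)
          / (1 + (s * ((k : ℝ) + 2)) ^ α) ^ 2 := by
        have : ((((k + 1 : ℕ) : ℤ) + 1 : ℤ) : ℝ) = (k : ℝ) + 2 := by push_cast; ring
        simp only [hg', this]
      rw [e]
      refine h1.trans ?_
      have h3 : (0 : ℝ) ≤ α - 1 := by linarith
      rw [div_mul_eq_mul_div, mul_div_assoc, div_div, mul_comm (_ ^ α) (s ^ α), ← mul_pow]
      gcongr
      linarith)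
    refine this.trans ?_
    rw [tsum_mul_left]
    have h3 : (0 : ℝ) ≤ α - 1 := by linarith
    have := aux_tail α hα12
    gcongr

/-- If `α ≥ 12` is an even integer and `s_α > 0` minimizes the lattice energy, then
`|s_α^α − (α − 2 + √((α−2)² − 3))| ≤ (2α/0.99²)·(α+1)²/(2^{α−1}(α−1))`. -/
theorem statement10 (α : ℕ) (hα : Even α) (hα12 : 12 ≤ α) (s : ℝ) (hs : 0 < s)
    (hmin : ∀ t : ℝ, 0 < t → latticeEnergy α s ≤ latticeEnergy α t) :
    |s ^ α - ((α : ℝ) - 2 + Real.sqrt (((α : ℝ) - 2) ^ 2 - 3))|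
      ≤ (2 * (α : ℝ) / 0.99 ^ 2) * ((α : ℝ) + 1) ^ 2 / (2 ^ (α - 1) * ((α : ℝ) - 1)) := by
  have hs1 : 1 < s := by
    by_contra! h
    have h1 := aux_small α hα hα12 s hs h
    have h2 := aux_upper α hα hα12
    have h3 := hmin 1.28 (by norm_num)
    linarith
  have hu : 1 ≤ s ^ α := one_le_pow₀ hs1.le
  obtain ⟨T, hT, hTb⟩ := aux_critical α hα hα12 s hs hmin
  have hA : (12 : ℝ) ≤ α := by exact_mod_cast hα12
  have hP : (2 : ℝ) ^ α = 2 * 2 ^ (α - 1) := by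
    rw [← pow_succ']; congr 1; omega
  rw [hP] at hTb
  have hPpos : (0 : ℝ) < 2 ^ (α - 1) := by positivity
  generalize s ^ α = u at *
  generalize (2 : ℝ) ^ (α - 1) = P at *
  generalize (α : ℝ) = A at *
  have hr0 : 0 ≤ (A - 2) ^ 2 - 3 := by nlinarith
  have hr2 := Real.sq_sqrt hr0
  have hr : A - 2.5 ≤ Real.sqrt ((A - 2) ^ 2 - 3) := by
    apply Real.le_sqrt_of_sq_le
    nlinarith
  generalize Real.sqrt ((A - 2) ^ 2 - 3) = r at *
  have key : (u - (A - 2 + r)) * (u - (A - 2 - r)) = -(2 * T * (1 + u) ^ 2) := by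
    have : (1 + u) ≠ 0 := by linarith
    field_simp at hT
    nlinarith
  have hd : u / 2 ≤ u - (A - 2 - r) := by linarith
  have habs : |u - (A - 2 + r)| * (u - (A - 2 - r)) = 2 * |T| * (1 + u) ^ 2 := by
    have h1 : |u - (A - 2 - r)| = u - (A - 2 - r) := abs_of_nonneg (by linarith)
    rw [← h1, ← abs_mul, key, abs_neg, abs_mul, abs_mul, abs_of_nonneg (sq_nonneg (1 + u))]
    norm_num
  have h1 : |u - (A - 2 + r)| * (u / 2) ≤ 2 * |T| * (1 + u) ^ 2 := by
    rw [← habs]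
    gcongr
  have h2 : 2 * |T| * (1 + u) ^ 2 ≤ 2 * ((A - 1) / u * (2 / (2 * P))) * (2 * u) ^ 2 := by
    have hT0 : 0 ≤ (A - 1) / u * (2 / (2 * P)) := (abs_nonneg T).trans hTb
    have : 1 + u ≤ 2 * u := by linarith
    gcongr
  have h3 : 2 * ((A - 1) / u * (2 / (2 * P))) * (2 * u) ^ 2 = 16 * (A - 1) / P * (u / 2) := by
    have : u ≠ 0 := by linarith
    field_simp
    ring
  have h4 : |u - (A - 2 + r)| ≤ 16 * (A - 1) / P :=
    le_of_mul_le_mul_right (by linarith) (by linarith : 0 < u / 2)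
  refine h4.trans ?_
  have hA1 : 0 < A - 1 := by linarith
  rw [div_le_div_iff₀ hPpos (by positivity)]
  have h5 : 16 * (A - 1) * (A - 1) ≤ 2 * A / 0.99 ^ 2 * (A + 1) ^ 2 := by
    have : 2 * A ≤ 2 * A / 0.99 ^ 2 := by
      rw [le_div_iff₀ (by norm_num)]
      nlinarith
    calc 16 * (A - 1) * (A - 1) ≤ 2 * A * (A + 1) ^ 2 := by nlinarith [sq_nonneg (A + 1)]
      _ ≤ _ := by gcongr
  calc 16 * (A - 1) * (P * (A - 1)) = 16 * (A - 1) * (A - 1) * P := by ring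
    _ ≤ _ := by gcongr
end

section
/- Let α ≥ 12 be an even integer, let s_α > 0 be a minimizer of t ↦ Σ_{n∈ℤ} t·f_α(t n) over t > 0, and set F_α(x) = 1/(1 + s_α^α x^α). Then: (i) 2α − 5 ≤ s_α^α ≤ 2α − 3; (ii) 1/(2α−2) ≤ F_α(1) ≤ 1/(2α−4); and (iii) (1/2)(1 − 1/(2α−4)) ≤ −F_α′(1) ≤ α/(2α−4), where F_α′ denotes the derivative of F_α. -/
lemma en_summable {α : ℕ} (hα12 : 12 ≤ α) {t : ℝ} (ht : 0 < t) :
    Summable (fun k : ℕ => t * (1 / (1 + (t * ((k : ℝ) + 1)) ^ α))) := by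
  have h1 : Summable (fun n : ℕ => 1 / (n : ℝ) ^ α) :=
    Real.summable_one_div_nat_pow.2 (by omega)
  have h2 := ((summable_nat_add_iff 1).2 h1).mul_left (t * (1 / t ^ α))
  refine Summable.of_nonneg_of_le (fun k => by positivity) (fun k => ?_) h2
  rw [mul_assoc]
  refine mul_le_mul_of_nonneg_left ?_ ht.le
  rw [one_div_mul_one_div, ← mul_pow]
  push_cast
  apply one_div_le_one_div_of_le (by positivity)
  linarith

lemma en_eq {α : ℕ} (hα : Even α) (hα12 : 12 ≤ α) {t : ℝ} (ht : 0 < t) :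
    latticeEnergy α t = t + 2 * ∑' k : ℕ, t * (1 / (1 + (t * ((k : ℝ) + 1)) ^ α)) := by
  have hs := en_summable hα12 ht
  have h1 : Summable (fun k : ℕ => t * (1 / (1 + (t * ((k : ℤ) : ℝ)) ^ α))) := by
    rw [← summable_nat_add_iff 1]
    push_cast
    exact hs
  have h3 : ∀ k : ℕ, t * (1 / (1 + (t * ((-((k : ℤ) + 1) : ℤ) : ℝ)) ^ α))
      = t * (1 / (1 + (t * ((k : ℝ) + 1)) ^ α)) := by
    intro k
    push_cast
    rw [mul_neg, hα.neg_pow]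
  have h2 : Summable (fun k : ℕ => t * (1 / (1 + (t * ((-((k : ℤ) + 1) : ℤ) : ℝ)) ^ α))) := by
    simp_rw [h3]
    exact hs
  unfold latticeEnergy
  rw [tsum_of_nat_of_neg_add_one (f := fun n : ℤ => t * (1 / (1 + (t * (n : ℝ)) ^ α))) h1 h2]
  simp_rw [h3]
  rw [h1.tsum_eq_zero_add]
  have : (0:ℝ) ^ α = 0 := zero_pow (by omega)
  simp [this]
  ring

/-- Splitting off the terms `n = 0, ±1`. -/
lemma en_eq2 {α : ℕ} (hα : Even α) (hα12 : 12 ≤ α) {t : ℝ} (ht : 0 < t) :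
    latticeEnergy α t = t * (1 + 2 / (1 + t ^ α)) +
      2 * ∑' k : ℕ, t * (1 / (1 + t ^ α * ((k : ℝ) + 2) ^ α)) := by
  rw [en_eq hα hα12 ht, (en_summable hα12 ht).tsum_eq_zero_add]
  have : ∀ k : ℕ, t * (1 / (1 + (t * (((k + 1 : ℕ) : ℝ) + 1)) ^ α))
      = t * (1 / (1 + t ^ α * ((k : ℝ) + 2) ^ α)) := by
    intro k
    rw [← mul_pow]
    push_cast
    ring_nf
  simp_rw [this]
  simp
  ring

lemma tail_summable {α : ℕ} (hα12 : 12 ≤ α) {t : ℝ} (ht : 0 < t) :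
    Summable (fun k : ℕ => t * (1 / (1 + t ^ α * ((k : ℝ) + 2) ^ α))) := by
  have h := (summable_nat_add_iff 1).2 (en_summable hα12 ht)
  refine h.congr (fun k => ?_)
  rw [← mul_pow]
  push_cast
  ring_nf

lemma S_summable {α : ℕ} (hα12 : 12 ≤ α) :
    Summable (fun k : ℕ => 1 / ((k : ℝ) + 2) ^ α) := by
  have h1 : Summable (fun n : ℕ => 1 / (n : ℝ) ^ α) :=
    Real.summable_one_div_nat_pow.2 (by omega)
  have := (summable_nat_add_iff 2).2 h1
  push_cast at this
  exact this

lemma S_le {α : ℕ} (hα12 : 12 ≤ α) :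
    ∑' k : ℕ, 1 / ((k : ℝ) + 2) ^ α ≤ 4 / 2 ^ α := by
  have hz := hasSum_zeta_two
  have h2 := hz.summable.sum_add_tsum_nat_add 2
  rw [hz.tsum_eq] at h2
  have hs2 := (summable_nat_add_iff 2).2 hz.summable
  simp [Finset.sum_range_succ] at h2
  have hpi : Real.pi ^ 2 / 6 ≤ 2 := by nlinarith [Real.pi_lt_d2, Real.pi_pos]
  have hle : ∑' k : ℕ, (((k : ℝ) + 2) ^ 2)⁻¹ ≤ 1 := by linarith
  have hs3 : Summable (fun k : ℕ => (((k : ℝ) + 2) ^ 2)⁻¹) := by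
    simpa using hs2
  calc ∑' k : ℕ, 1 / ((k : ℝ) + 2) ^ α ≤ ∑' k : ℕ, 4 / 2 ^ α * (((k : ℝ) + 2) ^ 2)⁻¹ := by
        refine (S_summable hα12).tsum_le_tsum (fun k => ?_) (hs3.mul_left _)
        obtain ⟨g, rfl⟩ := Nat.exists_eq_add_of_le' (show 2 ≤ α by omega)
        have hg : (2:ℝ) ^ g ≤ ((k:ℝ) + 2) ^ g := by
          apply pow_le_pow_left₀ (by norm_num)
          have : (0:ℝ) ≤ k := by positivity
          linarith
        rw [← one_div, div_mul_div_comm, pow_add, pow_add, div_le_div_iff₀ (by positivity) (by positivity)]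
        have : (0:ℝ) ≤ ((k:ℝ)+2)^2 := by positivity
        nlinarith
    _ ≤ 4 / 2 ^ α := by
        rw [tsum_mul_left]
        exact mul_le_of_le_one_right (by positivity) hle

lemma deriv_nonpos_of_left {ψ : ℝ → ℝ} {s D : ℝ} (hs : 0 < s) (h : HasDerivAt ψ D s)
    (hm : ∀ t, 0 < t → t < s → ψ s ≤ ψ t) : D ≤ 0 := by
  have h1 := (hasDerivAt_iff_tendsto_slope.1 h).mono_left
    (nhdsWithin_mono s (fun x (hx : x ∈ Set.Iio s) => ne_of_lt hx))
  refine le_of_tendsto h1 ?_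
  filter_upwards [Ioo_mem_nhdsLT hs] with t ht
  rw [slope_def_field]
  exact div_nonpos_of_nonneg_of_nonpos (by linarith [hm t ht.1 ht.2]) (by linarith [ht.2])

lemma deriv_nonneg_of_right {ψ : ℝ → ℝ} {s D : ℝ} (h : HasDerivAt ψ D s)
    (hm : ∀ t, s < t → ψ s ≤ ψ t) : 0 ≤ D := by
  have h1 := (hasDerivAt_iff_tendsto_slope.1 h).mono_left
    (nhdsWithin_mono s (fun x (hx : x ∈ Set.Ioi s) => ne_of_gt hx))
  refine ge_of_tendsto h1 ?_
  filter_upwards [self_mem_nhdsWithin] with t (ht : s < t)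
  rw [slope_def_field]
  exact div_nonneg (by linarith [hm t ht]) (by linarith [ht])

/-- Derivative of the main part. -/
lemma phi_deriv {α : ℕ} (hα12 : 12 ≤ α) {s : ℝ} (hs : 0 < s) :
    HasDerivAt (fun t : ℝ => t * (1 + 2 / (1 + t ^ α)))
      (1 + 2 / (1 + s ^ α) - 2 * α * s ^ α / (1 + s ^ α) ^ 2) s := by
  have hne : 1 + s ^ α ≠ 0 := by positivity
  have h := (hasDerivAt_id s).mul ((((hasDerivAt_pow α s).const_add 1).fun_inv hne).const_mul 2
    |>.const_add 1)
  obtain ⟨g, rfl⟩ := Nat.exists_eq_add_of_le' (show 1 ≤ α by omega)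
  refine (h.congr_deriv ?_).congr_of_eventuallyEq (Filter.Eventually.of_forall fun t => ?_)
  · simp only [id, Nat.add_sub_cancel]
    push_cast
    field_simp
    ring
  · simp [div_eq_mul_inv]

lemma inv_deriv {α : ℕ} (hα12 : 12 ≤ α) {s : ℝ} (hs : 0 < s) (S : ℝ) :
    HasDerivAt (fun t : ℝ => 2 * S * (t * (1 / t ^ α - 1 / s ^ α)))
      (- (2 * S * α / s ^ α)) s := by
  have hne : s ^ α ≠ 0 := by positivity
  have h := ((hasDerivAt_id s).mul (((hasDerivAt_pow α s).fun_inv hne).sub_const (1 / s ^ α))).const_mul (2 * S)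
  obtain ⟨g, rfl⟩ := Nat.exists_eq_add_of_le' (show 1 ≤ α by omega)
  refine (h.congr_deriv ?_).congr_of_eventuallyEq (Filter.Eventually.of_forall fun t => ?_)
  · simp only [id, Nat.add_sub_cancel]
    push_cast
    field_simp
    ring
  · simp [div_eq_mul_inv]

lemma two_pow_ge {α : ℕ} (hα12 : 12 ≤ α) : (32 * α : ℝ) ≤ 2 ^ α := by
  induction α, hα12 using Nat.le_induction with
  | base => norm_num
  | succ n hn ih =>
    rw [pow_succ]
    push_cast
    have : (12:ℝ) ≤ n := by exact_mod_cast hn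
    linarith

lemma upper {α : ℕ} (hα : Even α) (hα12 : 12 ≤ α) {s : ℝ} (hs : 0 < s)
    (hmin : ∀ t : ℝ, 0 < t → latticeEnergy α s ≤ latticeEnergy α t) :
    s ^ α ≤ 2 * (α : ℝ) - 3 := by
  by_contra! hy
  have hα' : (12:ℝ) ≤ α := by exact_mod_cast hα12
  have hS := S_le hα12
  have hSs := S_summable hα12
  have hS0 : 0 ≤ ∑' k : ℕ, 1 / ((k : ℝ) + 2) ^ α := tsum_nonneg fun k => by positivity
  set S := ∑' k : ℕ, 1 / ((k : ℝ) + 2) ^ α with hSdef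
  have hd := (phi_deriv hα12 hs).add (inv_deriv hα12 hs S)
  have := deriv_nonpos_of_left hs hd (fun t ht hts => by
    have h := hmin t ht
    rw [en_eq2 hα hα12 ht, en_eq2 hα hα12 hs] at h
    have hpow : t ^ α ≤ s ^ α := pow_le_pow_left₀ ht.le hts.le _
    have key : ∑' k : ℕ, t * (1 / (1 + t ^ α * ((k : ℝ) + 2) ^ α)) ≤
        ∑' k : ℕ, (s * (1 / (1 + s ^ α * ((k : ℝ) + 2) ^ α)) +
          t * (1 / t ^ α - 1 / s ^ α) * (1 / ((k : ℝ) + 2) ^ α)) := by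
      refine (tail_summable hα12 ht).tsum_le_tsum (fun k => ?_)
        ((tail_summable hα12 hs).add (hSs.mul_left _))
      have hm : 0 < ((k : ℝ) + 2) ^ α := by positivity
      have ht' : 0 < t ^ α := by positivity
      have hs' : 0 < s ^ α := by positivity
      generalize ((k : ℝ) + 2) ^ α = m at *
      generalize t ^ α = a at *
      generalize s ^ α = b at *
      have h1 : t * (1 / (1 + b * m)) ≤ s * (1 / (1 + b * m)) :=
        mul_le_mul_of_nonneg_right hts.le (by positivity)
      have h2 : 1 / (1 + a * m) - 1 / (1 + b * m) ≤ (1 / a - 1 / b) * (1 / m) := by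
        have e1 : 1 / (1 + a * m) - 1 / (1 + b * m) = m * (b - a) / ((1 + a * m) * (1 + b * m)) := by
          field_simp
          ring
        have e2 : (1 / a - 1 / b) * (1 / m) = m * (b - a) / ((a * m) * (b * m)) := by
          field_simp
        rw [e1, e2]
        apply div_le_div_of_nonneg_left
        · exact mul_nonneg hm.le (by linarith)
        · positivity
        · have := mul_pos ht' hm
          have := mul_pos hs' hm
          nlinarith
      have h3 := mul_le_mul_of_nonneg_left h2 ht.le
      linarith
    rw [(tail_summable hα12 hs).tsum_add (hSs.mul_left _),
      tsum_mul_left (f := fun k : ℕ => 1 / ((k : ℝ) + 2) ^ α), ← hSdef] at key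
    simp only [Pi.add_apply, sub_self, mul_zero, add_zero]
    linarith)
  have hyS : 2 * S * α ≤ 1 / 4 := by
    have h2 := two_pow_ge hα12
    have : S ≤ 4 / (32 * α) := hS.trans (by gcongr)
    rw [le_div_iff₀ (by positivity)] at this
    linarith
  generalize s ^ α = y at *
  have hy0 : 0 < y := by linarith
  have h1 : 2 * S * α / y ≤ 1 / 4 / y := by gcongr
  have h2 : 1 / (1 + y) ≤ 1 + 2 / (1 + y) - 2 * α * y / (1 + y) ^ 2 := by
    have : 1 + 2 / (1 + y) - 2 * α * y / (1 + y) ^ 2 - 1 / (1 + y)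
        = ((1 + y) ^ 2 + (1 + y) - 2 * α * y) / (1 + y) ^ 2 := by
      field_simp
      ring
    have h3 : 0 ≤ ((1 + y) ^ 2 + (1 + y) - 2 * α * y) / (1 + y) ^ 2 := by
      apply div_nonneg _ (by positivity)
      nlinarith
    linarith
  have h3 : 1 / 4 / y < 1 / (1 + y) := by
    rw [div_lt_div_iff₀ (by positivity) (by positivity)]
    linarith
  linarith

lemma lower {α : ℕ} (hα : Even α) (hα12 : 12 ≤ α) {s : ℝ} (hs : 1 ≤ s)
    (hmin : ∀ t : ℝ, 0 < t → latticeEnergy α s ≤ latticeEnergy α t) :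
    2 * (α : ℝ) - 5 ≤ s ^ α := by
  by_contra! hy
  have hα' : (12:ℝ) ≤ α := by exact_mod_cast hα12
  have hs0 : 0 < s := by linarith
  have hy1 : 1 ≤ s ^ α := one_le_pow₀ hs
  have := deriv_nonneg_of_right (phi_deriv hα12 hs0) (fun t hts => by
    have ht : 0 < t := by linarith
    have h := hmin t ht
    rw [en_eq2 hα hα12 ht, en_eq2 hα hα12 hs0] at h
    have key : ∑' k : ℕ, t * (1 / (1 + t ^ α * ((k : ℝ) + 2) ^ α)) ≤
        ∑' k : ℕ, s * (1 / (1 + s ^ α * ((k : ℝ) + 2) ^ α)) := by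
      refine (tail_summable hα12 ht).tsum_le_tsum (fun k => ?_) (tail_summable hα12 hs0)
      have hm : 1 ≤ ((k : ℝ) + 2) ^ α := one_le_pow₀ (by
        have : (0:ℝ) ≤ k := by positivity
        linarith)
      generalize ((k : ℝ) + 2) ^ α = m at *
      obtain ⟨g, rfl⟩ := Nat.exists_eq_add_of_le' (show 2 ≤ α by omega)
      rw [pow_add, pow_add]
      have ha : 1 ≤ s ^ g := one_le_pow₀ hs
      have hab : s ^ g ≤ t ^ g := pow_le_pow_left₀ hs0.le hts.le _
      generalize s ^ g = a at *
      generalize t ^ g = b at *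
      have hb : 1 ≤ b := ha.trans hab
      rw [mul_one_div, mul_one_div, div_le_div_iff₀ (by positivity) (by positivity)]
      have e1 : 1 ≤ m * a * (s * t) := by
        have : 1 ≤ s * t := by nlinarith
        have : 1 ≤ m * a := by nlinarith
        nlinarith
      have e2 : (t - s) ≤ m * a * (s * t) * (t - s) := by nlinarith
      have e3 : s * a * t ^ 2 * m ≤ s * b * t ^ 2 * m := by gcongr
      nlinarith
    linarith)
  generalize s ^ α = y at *
  have e : 1 + 2 / (1 + y) - 2 * α * y / (1 + y) ^ 2
        = ((1 + y) ^ 2 + 2 * (1 + y) - 2 * α * y) / (1 + y) ^ 2 := by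
      field_simp
  rw [e] at this
  have h3 : ((1 + y) ^ 2 + 2 * (1 + y) - 2 * α * y) / (1 + y) ^ 2 < 0 := by
    apply div_neg_of_neg_of_pos _ (by positivity)
    nlinarith
  linarith

lemma en_test {α : ℕ} (hα : Even α) (hα12 : 12 ≤ α) : latticeEnergy α (4 / 3) < 1.42 := by
  rw [en_eq2 hα hα12 (by norm_num)]
  have hp : (31.5:ℝ) ≤ (4 / 3) ^ α :=
    le_trans (by norm_num) (pow_le_pow_right₀ (by norm_num : (1:ℝ) ≤ 4 / 3) hα12)
  have hp2 : (4096:ℝ) ≤ 2 ^ α :=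
    le_trans (by norm_num) (pow_le_pow_right₀ (by norm_num : (1:ℝ) ≤ 2) hα12)
  have hS : ∑' k : ℕ, 1 / ((k : ℝ) + 2) ^ α ≤ 4 / 4096 := (S_le hα12).trans (by gcongr)
  have key : ∑' k : ℕ, (4 / 3 : ℝ) * (1 / (1 + (4 / 3) ^ α * ((k : ℝ) + 2) ^ α)) ≤
      ∑' k : ℕ, (4 / 3 : ℝ) * (1 / ((k : ℝ) + 2) ^ α) := by
    refine (tail_summable hα12 (by norm_num)).tsum_le_tsum (fun k => ?_)
      ((S_summable hα12).mul_left _)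
    gcongr
    have : 0 < ((k : ℝ) + 2) ^ α := by positivity
    nlinarith
  rw [tsum_mul_left (f := fun k : ℕ => 1 / ((k : ℝ) + 2) ^ α)] at key
  have : 2 / (1 + (4 / 3 : ℝ) ^ α) ≤ 2 / (1 + 31.5) := by gcongr
  norm_num at this hS key ⊢
  linarith

lemma en_ge {α : ℕ} (hα : Even α) (hα12 : 12 ≤ α) {t : ℝ} (ht : 0 < t) (N : ℕ)
    (hN : t * N ≤ 1) :
    t + 2 * ∑ k ∈ Finset.range N, t * (1 / (1 + (t * ((k : ℝ) + 1)) ^ 12)) ≤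
      latticeEnergy α t := by
  rw [en_eq hα hα12 ht]
  have h1 := (en_summable hα12 ht).sum_le_tsum (Finset.range N) (fun k _ => by positivity)
  have h2 : ∑ k ∈ Finset.range N, t * (1 / (1 + (t * ((k : ℝ) + 1)) ^ 12)) ≤
      ∑ k ∈ Finset.range N, t * (1 / (1 + (t * ((k : ℝ) + 1)) ^ α)) := by
    refine Finset.sum_le_sum fun k hk => ?_
    have hk' : (k:ℝ) + 1 ≤ N := by exact_mod_cast Finset.mem_range.1 hk
    have : t * ((k : ℝ) + 1) ≤ 1 := le_trans (by gcongr) hN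
    have := pow_le_pow_of_le_one (by positivity) this hα12
    gcongr
  linarith

lemma sum_pow_le (M : ℕ) :
    ∑ k ∈ Finset.range M, ((k : ℝ) + 1) ^ 12 ≤ (M : ℝ) ^ 13 / 13 + (M : ℝ) ^ 12 := by
  induction M with
  | zero => simp
  | succ n ih =>
    rw [Finset.sum_range_succ]
    push_cast
    have : (n : ℝ) ^ 13 + 13 * (n:ℝ) ^ 12 ≤ ((n:ℝ) + 1) ^ 13 := by
      have hn : (0:ℝ) ≤ n := by positivity
      have : ((n:ℝ) + 1) ^ 13 - ((n : ℝ) ^ 13 + 13 * (n:ℝ) ^ 12) ≥ 0 := by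
        ring_nf
        positivity
      linarith
    linarith

lemma poly_ineq {z : ℝ} (hz : 0 ≤ z) : 13 * z ^ 12 ≤ 1 + 12 * z ^ 13 := by
  have : 1 + 12 * z ^ 13 - 13 * z ^ 12 = (z - 1) ^ 2 * (12 * z ^ 11 + 11 * z ^ 10 + 10 * z ^ 9
    + 9 * z ^ 8 + 8 * z ^ 7 + 7 * z ^ 6 + 6 * z ^ 5 + 5 * z ^ 4 + 4 * z ^ 3 + 3 * z ^ 2
    + 2 * z + 1) := by ring
  have h2 : 0 ≤ 1 + 12 * z ^ 13 - 13 * z ^ 12 := by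
    rw [this]
    positivity
  linarith

lemma en_small {α : ℕ} (hα : Even α) (hα12 : 12 ≤ α) {t : ℝ} (ht : 0 < t) (ht1 : t < 1) :
    1.42 < latticeEnergy α t := by
  rcases le_or_gt t 0.4 with h4 | h4
  · set M := ⌊1 / t⌋₊ with hM
    have hM1 : (M : ℝ) ≤ 1 / t := Nat.floor_le (by positivity)
    have hM2 : 1 / t < M + 1 := Nat.lt_floor_add_one _
    rw [le_div_iff₀ ht] at hM1
    rw [div_lt_iff₀ ht] at hM2
    have h := en_ge hα hα12 ht M (by linarith)
    have h2 : ∑ k ∈ Finset.range M, (t - t ^ 13 * ((k : ℝ) + 1) ^ 12) ≤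
        ∑ k ∈ Finset.range M, t * (1 / (1 + (t * ((k : ℝ) + 1)) ^ 12)) := by
      refine Finset.sum_le_sum fun k _ => ?_
      have e : t - t ^ 13 * ((k : ℝ) + 1) ^ 12 = t * (1 - (t * ((k : ℝ) + 1)) ^ 12) := by ring
      rw [e]
      refine mul_le_mul_of_nonneg_left ?_ ht.le
      have : 0 ≤ (t * ((k : ℝ) + 1)) ^ 12 := by positivity
      rw [le_div_iff₀ (by positivity)]
      nlinarith
    rw [Finset.sum_sub_distrib, ← Finset.mul_sum] at h2
    simp only [Finset.sum_const, Finset.card_range, nsmul_eq_mul] at h2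
    have h3 := mul_le_mul_of_nonneg_left (sum_pow_le M) (show 0 ≤ t ^ 13 by positivity)
    have e3 : t ^ 13 * ((M : ℝ) ^ 13 / 13 + (M : ℝ) ^ 12)
        = (M * t) ^ 13 / 13 + t * (M * t) ^ 12 := by ring
    rw [e3] at h3
    have hz0 : 0 ≤ (M : ℝ) * t := by positivity
    have hz : 1 - t < (M : ℝ) * t := by linarith
    generalize (M : ℝ) * t = z at *
    have hp := poly_ineq hz0
    have hz12 : z ^ 12 ≤ 1 := pow_le_one₀ hz0 hM1
    have : (1 - z) * (1 - z ^ 12) ≤ t * (1 - z ^ 12) :=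
      mul_le_mul_of_nonneg_right (by linarith) (by linarith)
    have e4 : (1 - z) * (1 - z ^ 12) = 1 - z - z ^ 12 + z ^ 13 := by ring
    norm_num at h4 ⊢
    nlinarith
  rcases le_or_gt t 0.5 with h5 | h5
  · have h := en_ge hα hα12 ht 2 (by norm_num at h5 ⊢; linarith)
    simp [Finset.sum_range_succ] at h
    have e1 : (1 / 1.1 : ℝ) ≤ (1 + t ^ 12)⁻¹ := by
      rw [← one_div]
      have : t ^ 12 ≤ 0.5 ^ 12 := pow_le_pow_left₀ ht.le h5 _
      apply one_div_le_one_div_of_le (by positivity)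
      norm_num at this ⊢
      linarith
    have e2 : (1 / 2 : ℝ) ≤ (1 + (t * (1 + 1)) ^ 12)⁻¹ := by
      rw [← one_div]
      have : (t * (1 + 1)) ^ 12 ≤ 1 := pow_le_one₀ (by positivity) (by norm_num at h5 ⊢; linarith)
      apply one_div_le_one_div_of_le (by positivity)
      linarith
    norm_num at h4 h5 e1 e2 h ⊢
    nlinarith
  have h := en_ge hα hα12 ht 1 (by norm_num; linarith)
  simp at h
  rcases le_or_gt t 0.8 with h8 | h8
  · have e1 : (1 / 1.07 : ℝ) ≤ (1 + t ^ 12)⁻¹ := by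
      rw [← one_div]
      have : t ^ 12 ≤ 0.8 ^ 12 := pow_le_pow_left₀ ht.le h8 _
      apply one_div_le_one_div_of_le (by positivity)
      norm_num at this ⊢
      linarith
    norm_num at h5 e1 h ⊢
    nlinarith
  · have e1 : (1 / 2 : ℝ) ≤ (1 + t ^ 12)⁻¹ := by
      rw [← one_div]
      have : t ^ 12 ≤ 1 := pow_le_one₀ ht.le ht1.le
      apply one_div_le_one_div_of_le (by positivity)
      linarith
    norm_num at h8 e1 h ⊢
    nlinarith

/-- Estimates on `s_α^α`, `F_α(1)` and `F_α′(1)` for `α ≥ 12`, where `s_α > 0` minimizes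
the lattice energy and `F_α(x) = 1/(1 + s_α^α x^α)`. -/
theorem statement11 (α : ℕ) (hα : Even α) (hα12 : 12 ≤ α) (s : ℝ) (hs : 0 < s)
    (hmin : ∀ t : ℝ, 0 < t → latticeEnergy α s ≤ latticeEnergy α t)
    (F : ℝ → ℝ) (hF : ∀ x, F x = 1 / (1 + s ^ α * x ^ α)) :
    (2 * (α : ℝ) - 5 ≤ s ^ α ∧ s ^ α ≤ 2 * (α : ℝ) - 3) ∧
    (1 / (2 * (α : ℝ) - 2) ≤ F 1 ∧ F 1 ≤ 1 / (2 * (α : ℝ) - 4)) ∧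
    ((1 / 2) * (1 - 1 / (2 * (α : ℝ) - 4)) ≤ -(deriv F 1) ∧
      -(deriv F 1) ≤ (α : ℝ) / (2 * (α : ℝ) - 4)) := by
  have hα' : (12:ℝ) ≤ α := by exact_mod_cast hα12
  have hs1 : 1 ≤ s := by
    by_contra! h
    have h1 := en_small hα hα12 hs h
    have h2 := en_test hα hα12
    have h3 := hmin (4 / 3) (by norm_num)
    linarith
  have hlo := lower hα hα12 hs1 hmin
  have hup := upper hα hα12 hs hmin
  have hd : deriv F 1 = -(α * s ^ α / (1 + s ^ α) ^ 2) := by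
    have hF' : F = fun x => (1 + s ^ α * x ^ α)⁻¹ := by
      funext x
      rw [hF, one_div]
    have hne : 1 + s ^ α * 1 ^ α ≠ 0 := by positivity
    have h := (((hasDerivAt_pow α (1:ℝ)).const_mul (s ^ α)).const_add 1).fun_inv hne
    rw [hF', h.deriv]
    simp
    ring
  have hF1 : F 1 = 1 / (1 + s ^ α) := by rw [hF]; simp
  rw [hd, hF1, neg_neg]
  generalize s ^ α = y at *
  have hy : 0 < y := by linarith
  refine ⟨⟨hlo, hup⟩, ⟨?_, ?_⟩, ?_, ?_⟩
  · exact one_div_le_one_div_of_le (by linarith) (by linarith)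
  · exact one_div_le_one_div_of_le (by linarith) (by linarith)
  · have h1 : 1 / 2 ≤ α / (1 + y) := by
      rw [div_le_div_iff₀ (by norm_num) (by linarith)]
      linarith
    have h2 : 1 / (1 + y) ≤ 1 / (2 * (α : ℝ) - 4) :=
      one_div_le_one_div_of_le (by linarith) (by linarith)
    have h3 : 1 / (1 + y) ≤ 1 := by
      rw [div_le_one (by linarith)]
      linarith
    have e : α * y / (1 + y) ^ 2 = α / (1 + y) * (1 - 1 / (1 + y)) := by
      field_simp
      ring
    rw [e]
    calc 1 / 2 * (1 - 1 / (2 * (α : ℝ) - 4)) ≤ 1 / 2 * (1 - 1 / (1 + y)) := by linarith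
      _ ≤ _ := mul_le_mul_of_nonneg_right h1 (by linarith)
  · rw [div_le_div_iff₀ (by positivity) (by linarith)]
    have : y * (2 * (α : ℝ) - 4) ≤ (1 + y) ^ 2 := by nlinarith
    nlinarith
end

section
/- Let α ≥ 12 be an even integer, let s_α > 0 be a minimizer of t ↦ Σ_{n∈ℤ} t·f_α(t n) over t > 0, and set F_α(x) = 1/(1 + s_α^α x^α). Then (1/2)·(1 − 2·Σ_{n=1}^∞ F_α(n)) − (1/π)·Σ_{n=2}^∞ |F_α′(n)| ≥ 0, where F_α′ denotes the derivative of F_α. -/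
/-- Positive half of the lattice sum. -/
noncomputable def halfSum (α : ℕ) (t : ℝ) : ℝ :=
  ∑' n : ℕ, 1 / (1 + (t * ((n : ℝ) + 1)) ^ α)

lemma partial_telescope (c : ℝ) (N : ℕ) :
    ∑ i ∈ Finset.range N, c / (((i : ℝ) + 1) * ((i : ℝ) + 2)) = c * (1 - 1 / ((N : ℝ) + 1)) := by
  induction N with
  | zero => simp
  | succ k ih =>
    rw [Finset.sum_range_succ, ih]
    push_cast
    have h1 : (k : ℝ) + 1 ≠ 0 := by positivity
    have h2 : (k : ℝ) + 2 ≠ 0 := by positivity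
    have h3 : (k : ℝ) + 1 + 1 ≠ 0 := by positivity
    field_simp
    ring

lemma bound_tele (a : ℕ → ℝ) (c : ℝ) (hc : 0 ≤ c) (h0 : ∀ n, 0 ≤ a n)
    (h : ∀ n : ℕ, a n ≤ c / (((n : ℝ) + 1) * ((n : ℝ) + 2))) :
    Summable a ∧ ∑' n, a n ≤ c := by
  have key : ∀ N, ∑ i ∈ Finset.range N, a i ≤ c := by
    intro N
    calc ∑ i ∈ Finset.range N, a i
        ≤ ∑ i ∈ Finset.range N, c / (((i : ℝ) + 1) * ((i : ℝ) + 2)) :=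
          Finset.sum_le_sum (fun i _ => h i)
      _ = c * (1 - 1 / ((N : ℝ) + 1)) := partial_telescope c N
      _ ≤ c * 1 := by
          apply mul_le_mul_of_nonneg_left _ hc
          have : 0 ≤ 1 / ((N : ℝ) + 1) := by positivity
          linarith
      _ = c := mul_one c
  exact ⟨summable_of_sum_range_le h0 key, Real.tsum_le_of_sum_range_le h0 key⟩

/-- For `m ≥ 2`, `m^α` beats `2^10 (m-1) m`. -/
lemma pow_big (α : ℕ) (h : 12 ≤ α) (n : ℕ) :
    1024 * (((n : ℝ) + 1) * ((n : ℝ) + 2)) ≤ ((n : ℝ) + 2) ^ α := by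
  have hn : (0 : ℝ) ≤ n := Nat.cast_nonneg n
  have h1 : ((n : ℝ) + 2) ^ 12 ≤ ((n : ℝ) + 2) ^ α :=
    pow_le_pow_right₀ (by linarith) h
  have h2 : (2 : ℝ) ^ 10 ≤ ((n : ℝ) + 2) ^ 10 :=
    pow_le_pow_left₀ (by norm_num) (by linarith) 10
  have h3 : ((n : ℝ) + 2) ^ 12 = ((n : ℝ) + 2) ^ 10 * ((n : ℝ) + 2) ^ 2 := by ring
  have h4 : ((n : ℝ) + 1) * ((n : ℝ) + 2) ≤ ((n : ℝ) + 2) ^ 2 := by nlinarith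
  have h5 : (2 : ℝ) ^ 10 * (((n : ℝ) + 1) * ((n : ℝ) + 2))
      ≤ ((n : ℝ) + 2) ^ 10 * ((n : ℝ) + 2) ^ 2 := by
    apply mul_le_mul h2 h4 <;> positivity
  norm_num at h5
  linarith

lemma tail_bound (α : ℕ) (h : 12 ≤ α) (u : ℝ) (hu : 0 < u) :
    Summable (fun n : ℕ => 1 / (1 + u * ((n : ℝ) + 2) ^ α)) ∧
    ∑' n : ℕ, 1 / (1 + u * ((n : ℝ) + 2) ^ α) ≤ 1 / (1024 * u) := by
  apply bound_tele
  · positivity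
  · intro n; positivity
  · intro n
    rw [div_div]
    apply one_div_le_one_div_of_le (by positivity)
    have := mul_le_mul_of_nonneg_left (pow_big α h n) hu.le
    nlinarith

lemma half_summable (α : ℕ) (h : 12 ≤ α) (t : ℝ) (ht : 0 < t) :
    Summable (fun n : ℕ => 1 / (1 + (t * ((n : ℝ) + 1)) ^ α)) := by
  rw [← summable_nat_add_iff 1]
  refine (tail_bound α h (t ^ α) (by positivity)).1.congr ?_
  intro n
  push_cast
  rw [mul_pow]
  ring_nf

lemma half_split (α : ℕ) (h : 12 ≤ α) (t : ℝ) (ht : 0 < t) :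
    halfSum α t = 1 / (1 + t ^ α) + ∑' n : ℕ, 1 / (1 + t ^ α * ((n : ℝ) + 2) ^ α) := by
  unfold halfSum
  rw [(half_summable α h t ht).tsum_eq_zero_add]
  congr 1
  · simp
  · apply tsum_congr
    intro n
    push_cast
    rw [mul_pow]
    ring_nf

lemma energy_eq (α : ℕ) (hα : Even α) (h : 12 ≤ α) (t : ℝ) (ht : 0 < t) :
    latticeEnergy α t = t * (1 + 2 * halfSum α t) := by
  have hs := half_summable α h t ht
  have hs1 : Summable (fun n : ℕ => t * (1 / (1 + (t * ((n : ℝ) + 1)) ^ α))) := hs.mul_left t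
  have hz : Summable (fun n : ℕ => t * (1 / (1 + (t * (n : ℝ)) ^ α))) := by
    rw [← summable_nat_add_iff 1]
    refine hs1.congr ?_
    intro n
    push_cast
    rfl
  have hneg : ∀ n : ℕ, t * (1 / (1 + (t * (((-((n : ℤ) + 1) : ℤ)) : ℝ)) ^ α))
      = t * (1 / (1 + (t * ((n : ℝ) + 1)) ^ α)) := by
    intro n
    push_cast
    rw [show t * (-((n : ℝ) + 1)) = -(t * ((n : ℝ) + 1)) by ring, hα.neg_pow]
  unfold latticeEnergy
  rw [tsum_of_nat_of_neg_add_one (f := fun n : ℤ => t * (1 / (1 + (t * (n : ℝ)) ^ α)))]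
  · simp only [hneg, Int.cast_natCast]
    rw [hz.tsum_eq_zero_add]
    have h0 : α ≠ 0 := by omega
    push_cast
    rw [tsum_mul_left]
    unfold halfSum
    simp only [mul_zero, zero_pow h0, add_zero, div_one]
    ring
  · simpa using hz
  · simp only [hneg]; exact hs1

lemma energy_upper (α : ℕ) (hα : Even α) (h : 12 ≤ α) :
    latticeEnergy α (1.28 : ℝ) < 1.41 := by
  rw [energy_eq α hα h _ (by norm_num), half_split α h _ (by norm_num)]
  have h1 : (1.28 : ℝ) ^ 12 ≤ (1.28 : ℝ) ^ α := pow_le_pow_right₀ (by norm_num) h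
  have h2 : (19.3 : ℝ) ≤ (1.28 : ℝ) ^ α := le_trans (by norm_num) h1
  have h3 := (tail_bound α h ((1.28 : ℝ) ^ α) (by positivity)).2
  have h4 : 1 / (1024 * (1.28 : ℝ) ^ α) ≤ 1 / (1024 * 19.3) :=
    one_div_le_one_div_of_le (by norm_num) (by linarith)
  have h5 : 1 / (1 + (1.28 : ℝ) ^ α) ≤ 1 / (1 + 19.3) :=
    one_div_le_one_div_of_le (by norm_num) (by linarith)
  norm_num at h3 h4 h5 ⊢
  linarith

lemma step_lower (α : ℕ) (h : 12 ≤ α) (s : ℝ) (hs : 0 < s) (K N : ℕ) (hKN : K ≤ N)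
    (hK : s * K ≤ 0.8) (hN : s * N ≤ 1) :
    0.5 * (N : ℝ) + 0.43 * K ≤ halfSum α s := by
  have h1 : ∑ i ∈ Finset.range N, 1 / (1 + (s * ((i : ℝ) + 1)) ^ α) ≤ halfSum α s :=
    (half_summable α h s hs).sum_le_tsum _ (fun i _ => by positivity)
  refine le_trans ?_ h1
  rw [← Finset.sum_range_add_sum_Ico _ hKN]
  have hA : (K : ℝ) * 0.93 ≤ ∑ i ∈ Finset.range K, 1 / (1 + (s * ((i : ℝ) + 1)) ^ α) := by
    have := Finset.card_nsmul_le_sum (Finset.range K)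
      (fun i : ℕ => 1 / (1 + (s * ((i : ℝ) + 1)) ^ α)) 0.93 ?_
    · simpa using this
    · intro i hi
      have hi' : (i : ℝ) + 1 ≤ K := by exact_mod_cast Finset.mem_range.1 hi
      have hx : s * ((i : ℝ) + 1) ≤ 0.8 := le_trans (mul_le_mul_of_nonneg_left hi' hs.le) hK
      have hx0 : 0 ≤ s * ((i : ℝ) + 1) := by positivity
      have hp : (s * ((i : ℝ) + 1)) ^ α ≤ 0.8 ^ 12 :=
        (pow_le_pow_left₀ hx0 hx α).trans
          (pow_le_pow_of_le_one (by norm_num) (by norm_num) h)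
      have hq : 0 ≤ (s * ((i : ℝ) + 1)) ^ α := by positivity
      rw [le_div_iff₀ (by linarith)]
      norm_num at hp ⊢
      linarith
  have hB : ((N : ℝ) - K) * 0.5 ≤ ∑ i ∈ Finset.Ico K N, 1 / (1 + (s * ((i : ℝ) + 1)) ^ α) := by
    have := Finset.card_nsmul_le_sum (Finset.Ico K N)
      (fun i : ℕ => 1 / (1 + (s * ((i : ℝ) + 1)) ^ α)) 0.5 ?_
    · rw [Nat.card_Ico, nsmul_eq_mul, Nat.cast_sub hKN] at this
      exact this
    · intro i hi
      have hi' : (i : ℝ) + 1 ≤ N := by exact_mod_cast (Finset.mem_Ico.1 hi).2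
      have hx : s * ((i : ℝ) + 1) ≤ 1 := le_trans (mul_le_mul_of_nonneg_left hi' hs.le) hN
      have hx0 : 0 ≤ s * ((i : ℝ) + 1) := by positivity
      have hp : (s * ((i : ℝ) + 1)) ^ α ≤ 1 := pow_le_one₀ hx0 hx
      have hq : 0 ≤ (s * ((i : ℝ) + 1)) ^ α := by positivity
      rw [le_div_iff₀ (by linarith)]
      linarith
  linarith

lemma energy_lower (α : ℕ) (hα : Even α) (h : 12 ≤ α) (s : ℝ) (hs : 0 < s) (hs1 : s ≤ 1) :
    1.41 ≤ latticeEnergy α s := by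
  rw [energy_eq α hα h s hs]
  have key : ∀ K N : ℕ, K ≤ N → s * K ≤ 0.8 → s * N ≤ 1 →
      1.41 ≤ s * (1 + N + 0.86 * K) → 1.41 ≤ s * (1 + 2 * halfSum α s) := by
    intro K N h1 h2 h3 h4
    refine h4.trans (mul_le_mul_of_nonneg_left ?_ hs.le)
    have := step_lower α h s hs K N h1 h2 h3
    linarith
  rcases lt_or_ge 0.75 s with c1 | c1
  · exact key 0 1 (by norm_num) (by norm_num) (by simpa using hs1) (by norm_num; linarith)
  rcases lt_or_ge 0.5 s with c2 | c2
  · exact key 1 1 (by norm_num) (by norm_num; linarith) (by norm_num; linarith)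
      (by norm_num; linarith)
  rcases lt_or_ge 0.4 s with c3 | c3
  · exact key 1 2 (by norm_num) (by norm_num; linarith) (by norm_num; linarith)
      (by norm_num; linarith)
  rcases lt_or_ge 0.31 s with c4 | c4
  · exact key 2 2 (by norm_num) (by norm_num; linarith) (by norm_num; linarith)
      (by norm_num; linarith)
  have a1 := Nat.floor_le (show 0 ≤ 1 / s by positivity)
  have a2 := Nat.lt_floor_add_one (1 / s)
  have b1 := Nat.floor_le (show 0 ≤ 0.8 / s by positivity)
  have b2 := Nat.lt_floor_add_one (0.8 / s)
  rw [le_div_iff₀ hs] at a1 b1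
  rw [div_lt_iff₀ hs] at a2 b2
  refine key ⌊0.8 / s⌋₊ ⌊1 / s⌋₊ ?_ (by linarith) (by linarith) ?_
  · apply Nat.floor_le_floor
    gcongr
    norm_num
  · norm_num at a2 b2 c4 ⊢
    nlinarith

lemma alpha_le_pow (α : ℕ) (h : 12 ≤ α) : (α : ℝ) ≤ 2 ^ (α - 8) := by
  have : α ≤ 2 ^ (α - 8) := by
    induction α, h using Nat.le_induction with
    | base => norm_num
    | succ k hk ih =>
      rw [show k + 1 - 8 = (k - 8) + 1 by omega, pow_succ]
      omega
  exact_mod_cast this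

lemma deriv_bound (α : ℕ) (h : 12 ≤ α) (u : ℝ) (hu : 3 ≤ u) (F : ℝ → ℝ)
    (hF : ∀ x, F x = 1 / (1 + u * x ^ α)) (n : ℕ) :
    |deriv F ((n : ℝ) + 2)| ≤ (1 / 3) / (((n : ℝ) + 1) * ((n : ℝ) + 2)) := by
  have hFe : F = fun x => 1 / (1 + u * x ^ α) := funext hF
  have hn : (0 : ℝ) ≤ n := Nat.cast_nonneg n
  set x : ℝ := (n : ℝ) + 2 with hx
  have hx2 : 2 ≤ x := by linarith
  have hx0 : 0 < x := by linarith
  have hne : 1 + u * x ^ α ≠ 0 := by positivity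
  have hd : HasDerivAt F (-(u * (α * x ^ (α - 1))) / (1 + u * x ^ α) ^ 2) x := by
    rw [hFe]
    have h1 : HasDerivAt (fun x : ℝ => 1 + u * x ^ α) (u * (α * x ^ (α - 1))) x :=
      ((hasDerivAt_pow α x).const_mul u).const_add 1
    simpa [one_div] using h1.fun_inv hne
  rw [hd.deriv, abs_div, abs_neg, abs_of_nonneg (by positivity), abs_of_nonneg (by positivity)]
  have hxn : ((n : ℝ) + 1) = x - 1 := by rw [hx]; ring
  rw [hxn, div_le_div_iff₀ (by positivity) (by nlinarith)]
  have ha : (α : ℝ) ≤ x ^ (α - 8) :=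
    (alpha_le_pow α h).trans (pow_le_pow_left₀ (by norm_num) hx2 _)
  have e1 : x ^ α = x ^ (α - 1) * x := by
    rw [← pow_succ]; congr 1; omega
  have e2 : x ^ α = x ^ (α - 8) * x ^ 8 := by
    rw [← pow_add]; congr 1; omega
  have hx8 : x ≤ x ^ 8 := le_self_pow₀ (by linarith) (by norm_num)
  have hP : 0 < x ^ α := by positivity
  -- α * x ≤ x ^ α
  have g1 : (α : ℝ) * x ≤ x ^ α := by
    rw [e2]; apply mul_le_mul ha hx8 <;> positivity
  have g2 : u * (α * x ^ (α - 1)) * ((x - 1) * x) = u * x ^ α * (α * (x - 1)) := by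
    rw [e1]; ring
  rw [g2]
  have g3 : (α : ℝ) * (x - 1) ≤ x ^ α := by
    have : (0 : ℝ) ≤ α := Nat.cast_nonneg α
    nlinarith
  have g4 : u * x ^ α * (α * (x - 1)) ≤ u * x ^ α * x ^ α :=
    mul_le_mul_of_nonneg_left g3 (by positivity)
  have g5 : 3 * (u * x ^ α * x ^ α) ≤ (u * x ^ α) ^ 2 := by
    have : (u * x ^ α) ^ 2 = u * (u * x ^ α * x ^ α) := by ring
    rw [this]
    exact mul_le_mul_of_nonneg_right hu (by positivity)
  have g6 : (0 : ℝ) ≤ u * x ^ α := by positivity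
  nlinarith

/-- For `α ≥ 12`, `(1/2)·(1 − 2Σ_{n=1}^∞ F_α(n)) − (1/π)·Σ_{n=2}^∞ |F_α′(n)| ≥ 0`. -/
theorem statement17 (α : ℕ) (hα : Even α) (hα12 : 12 ≤ α) (s : ℝ) (hs : 0 < s)
    (hmin : ∀ t : ℝ, 0 < t → latticeEnergy α s ≤ latticeEnergy α t)
    (F : ℝ → ℝ) (hF : ∀ x, F x = 1 / (1 + s ^ α * x ^ α)) :
    0 ≤ (1 / 2) * (1 - 2 * ∑' n : ℕ, F ((n : ℝ) + 1))
        - (1 / Real.pi) * ∑' n : ℕ, |deriv F ((n : ℝ) + 2)| := by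
  have hE : latticeEnergy α s < 1.41 :=
    (hmin 1.28 (by norm_num)).trans_lt (energy_upper α hα hα12)
  have hs1 : 1 < s := by
    by_contra hcon
    have := energy_lower α hα hα12 s hs (not_lt.1 hcon)
    linarith
  have hsum : ∑' n : ℕ, F ((n : ℝ) + 1) = halfSum α s := by
    unfold halfSum
    apply tsum_congr
    intro n
    rw [hF, mul_pow]
  rw [hsum]
  rw [energy_eq α hα hα12 s hs] at hE
  have hH0 : 0 ≤ halfSum α s := tsum_nonneg (fun n => by positivity)
  have hH : halfSum α s < 0.205 := by
    norm_num at hE ⊢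
    nlinarith
  have hu : 3 ≤ s ^ α := by
    have hsp := half_split α hα12 s hs
    have ht : 0 ≤ ∑' n : ℕ, 1 / (1 + s ^ α * ((n : ℝ) + 2) ^ α) :=
      tsum_nonneg (fun n => by positivity)
    have hp : 1 / (1 + s ^ α) < 0.205 := by linarith
    rw [div_lt_iff₀ (by positivity)] at hp
    norm_num at hp
    linarith
  have hD := (bound_tele (fun n : ℕ => |deriv F ((n : ℝ) + 2)|) (1 / 3) (by norm_num)
    (fun n => abs_nonneg _) (deriv_bound α hα12 _ hu F hF)).2
  have hpi : 1 / Real.pi ≤ 1 / 3 :=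
    one_div_le_one_div_of_le (by norm_num) Real.pi_gt_three.le
  have hD0 : 0 ≤ ∑' n : ℕ, |deriv F ((n : ℝ) + 2)| := tsum_nonneg (fun n => abs_nonneg _)
  have hm : (1 / Real.pi) * ∑' n : ℕ, |deriv F ((n : ℝ) + 2)| ≤ 1 / 3 * (1 / 3) :=
    mul_le_mul hpi hD hD0 (by norm_num)
  norm_num at hH hm ⊢
  linarith
end
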